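/- Let A and B be n×n complex positive definite matrices and let h, h' be reals with 1 < h' ≤ h such that h'·A ≤ B ≤ h·A in the Loewner order (equivalently h'·I ≤ A^{−1/2} B A^{−1/2} ≤ h·I). Then for every p ∈ [0,1], with r := min{p, 1−p} and R := max{p, 1−p}, one has K(h',2)^r · (A #_p B) ≤ A ∇_p B ≤ K(h,2)^R · (A #_p B) in the Loewner order. -/

import Mathlib

open Matrix ComplexOrder

/-- Real power of a (Hermitian) complex matrix via the continuous functional calculus,
corresponding to `Matrix.PosDef.rpow` on positive definite matrices. -/
noncomputable def mrpow {n : Type*} [Fintype n] [DecidableEq n]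
    (A : Matrix n n ℂ) (r : ℝ) : Matrix n n ℂ :=
  cfc (fun t : ℝ => t ^ r) A

/-- The Loewner order: `loe X Y` means `Y - X` is positive semidefinite. -/
def loe {n : Type*} [Fintype n] (X Y : Matrix n n ℂ) : Prop :=
  (Y - X).PosSemidef

/-- `A ♮ᵣ B = A^{1/2} (A^{-1/2} B A^{-1/2})^r A^{1/2}`; for `r ∈ [0,1]` this is the
weighted geometric mean `A #ᵣ B`. -/
noncomputable def natu {n : Type*} [Fintype n] [DecidableEq n]
    (A B : Matrix n n ℂ) (r : ℝ) : Matrix n n ℂ :=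
  mrpow A (1 / 2) * mrpow (mrpow A (-(1 / 2)) * B * mrpow A (-(1 / 2))) r * mrpow A (1 / 2)

/-- The Tsallis relative operator entropy `T_p(A|B) = (A #_p B - A) / p`. -/
noncomputable def TsallisEntropy {n : Type*} [Fintype n] [DecidableEq n]
    (A B : Matrix n n ℂ) (p : ℝ) : Matrix n n ℂ :=
  (1 / p : ℝ) • (natu A B p - A)

open scoped MatrixOrder

/-- The Kantorovich constant `K(x, 2)`. -/
noncomputable def kantorovich (x : ℝ) : ℝ := (x + 1) ^ (2 : ℕ) / (4 * x)

lemma kantorovich_pos {x : ℝ} (hx : 0 < x) : 0 < kantorovich x := by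
  unfold kantorovich
  positivity

lemma kantorovich_inv {x : ℝ} (hx : 0 < x) : kantorovich x⁻¹ = kantorovich x := by
  unfold kantorovich
  field_simp
  ring

lemma kantorovich_le_kantorovich {x y : ℝ} (hx : 1 ≤ x) (hxy : x ≤ y) :
    kantorovich x ≤ kantorovich y := by
  unfold kantorovich
  rw [div_le_div_iff₀ (by linarith) (by linarith)]
  nlinarith [mul_nonneg (sub_nonneg.2 hxy) (show (0 : ℝ) ≤ x * y - 1 by nlinarith)]

lemma kantorovich_rpow_mul_rpow_self {x : ℝ} (hx : 0 < x) (q : ℝ) :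
    kantorovich x ^ q * x ^ q = (1 + (x - 1) / 2) ^ (2 * q) := by
  rw [← Real.mul_rpow (kantorovich_pos hx).le hx.le, Real.rpow_mul (by linarith),
    Real.rpow_two]
  congr 1
  unfold kantorovich
  field_simp
  ring

lemma kantorovich_rpow_one_sub_mul_rpow {x : ℝ} (hx : 0 < x) (p : ℝ) :
    kantorovich x ^ (1 - p) * x ^ p =
      x * (kantorovich x⁻¹ ^ (1 - p) * x⁻¹ ^ (1 - p)) := by
  rw [kantorovich_inv hx, Real.inv_rpow hx.le, ← Real.rpow_neg hx.le, neg_sub,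
    Real.rpow_sub_one hx.ne']
  field_simp

lemma kantorovich_rpow_mul_rpow_self_le {x q : ℝ} (hx : 0 < x) (hq0 : 0 ≤ q) (hq : q ≤ 1 / 2) :
    kantorovich x ^ q * x ^ q ≤ (1 - q) + q * x := by
  rw [kantorovich_rpow_mul_rpow_self hx]
  have := rpow_one_add_le_one_add_mul_self (s := (x - 1) / 2) (by linarith)
    (p := 2 * q) (by linarith) (by linarith)
  linarith

lemma le_kantorovich_rpow_mul_rpow_self {x q : ℝ} (hx : 0 < x) (hq : 1 / 2 ≤ q) :
    (1 - q) + q * x ≤ kantorovich x ^ q * x ^ q := by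
  rw [kantorovich_rpow_mul_rpow_self hx]
  have := one_add_mul_self_le_rpow_one_add (s := (x - 1) / 2) (by linarith)
    (p := 2 * q) (by linarith)
  linarith

/-- Refined scalar Young inequality. -/
lemma kantorovich_rpow_min_mul_rpow_le {x p : ℝ} (hx : 0 < x) (hp0 : 0 ≤ p) (hp1 : p ≤ 1) :
    kantorovich x ^ min p (1 - p) * x ^ p ≤ (1 - p) + p * x := by
  rcases le_total p (1 - p) with h | h
  · rw [min_eq_left h]
    exact kantorovich_rpow_mul_rpow_self_le hx hp0 (by linarith)
  · rw [min_eq_right h, kantorovich_rpow_one_sub_mul_rpow hx]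
    calc _ ≤ x * ((1 - (1 - p)) + (1 - p) * x⁻¹) := by
          gcongr
          exact kantorovich_rpow_mul_rpow_self_le (inv_pos.2 hx) (by linarith) (by linarith)
      _ = (1 - p) + p * x := by
          field_simp
          ring

/-- Reverse scalar Young inequality. -/
lemma le_kantorovich_rpow_max_mul_rpow {x p : ℝ} (hx : 0 < x) :
    (1 - p) + p * x ≤ kantorovich x ^ max p (1 - p) * x ^ p := by
  rcases le_total p (1 - p) with h | h
  · rw [max_eq_right h, kantorovich_rpow_one_sub_mul_rpow hx]
    calc (1 - p) + p * x = x * ((1 - (1 - p)) + (1 - p) * x⁻¹) := by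
          field_simp
          ring
      _ ≤ _ := by
          gcongr
          exact le_kantorovich_rpow_mul_rpow_self (inv_pos.2 hx) (by linarith)
  · rw [max_eq_left h]
    exact le_kantorovich_rpow_mul_rpow_self hx (by linarith)

section

variable {n : Type*} [Fintype n] [DecidableEq n]

lemma isSelfAdjoint_mrpow (A : Matrix n n ℂ) (r : ℝ) : IsSelfAdjoint (mrpow A r) :=
  cfc_predicate _ _

lemma mrpow_mul_mrpow {A : Matrix n n ℂ} (hA : A.PosDef) (r s : ℝ) :
    mrpow A r * mrpow A s = mrpow A (r + s) := by
  have hpos : ∀ x ∈ spectrum ℝ A, 0 < x := fun x hx => hA.isStrictlyPositive.spectrum_pos hx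
  unfold mrpow
  rw [← cfc_mul _ _ A (A.finite_real_spectrum.continuousOn _)
    (A.finite_real_spectrum.continuousOn _)]
  exact cfc_congr fun x hx => (Real.rpow_add (hpos x hx) r s).symm

lemma mrpow_zero {A : Matrix n n ℂ} (hA : A.PosDef) : mrpow A 0 = 1 := by
  have : IsSelfAdjoint A := hA.isHermitian
  simp [mrpow, cfc_const_one ℝ A]

lemma mrpow_one {A : Matrix n n ℂ} (hA : A.PosDef) : mrpow A 1 = A := by
  have : IsSelfAdjoint A := hA.isHermitian
  simp [mrpow, cfc_id' ℝ A]

lemma smul_mrpow_le {C : Matrix n n ℂ} (hC : IsSelfAdjoint C) {a b c p : ℝ}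
    (h : ∀ x ∈ spectrum ℝ C, c * x ^ p ≤ a + b * x) :
    c • mrpow C p ≤ a • (1 : Matrix n n ℂ) + b • C := by
  have hc (f : ℝ → ℝ) : ContinuousOn f (spectrum ℝ C) := C.finite_real_spectrum.continuousOn f
  have key := cfc_mono (a := C) h (hc _) (hc _)
  rwa [cfc_const_mul _ _ _ (hc _), cfc_const_add _ _ _ (hc _), cfc_const_mul_id _ _,
    Algebra.algebraMap_eq_smul_one] at key

lemma le_smul_mrpow {C : Matrix n n ℂ} (hC : IsSelfAdjoint C) {a b c p : ℝ}
    (h : ∀ x ∈ spectrum ℝ C, a + b * x ≤ c * x ^ p) :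
    a • (1 : Matrix n n ℂ) + b • C ≤ c • mrpow C p := by
  have hc (f : ℝ → ℝ) : ContinuousOn f (spectrum ℝ C) := C.finite_real_spectrum.continuousOn f
  have key := cfc_mono (a := C) h (hc _) (hc _)
  rwa [cfc_const_mul _ _ _ (hc _), cfc_const_add _ _ _ (hc _), cfc_const_mul_id _ _,
    Algebra.algebraMap_eq_smul_one] at key

end

theorem stmt12 {n : Type*} [Fintype n] [DecidableEq n] {A B : Matrix n n ℂ}
    (hA : A.PosDef) (hB : B.PosDef) {h h' : ℝ} (hh'1 : 1 < h') (hh'h : h' ≤ h)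
    (hlow : loe (h' • A) B) (hup : loe B (h • A))
    {p : ℝ} (hp0 : 0 ≤ p) (hp1 : p ≤ 1) :
    loe ((((h' + 1) ^ (2 : ℕ) / (4 * h')) ^ min p (1 - p)) • natu A B p)
      ((1 - p) • A + p • B) ∧
    loe ((1 - p) • A + p • B)
      ((((h + 1) ^ (2 : ℕ) / (4 * h)) ^ max p (1 - p)) • natu A B p) := by
  have hhalf : mrpow A (1 / 2) * mrpow A (1 / 2) = A := by
    rw [mrpow_mul_mrpow hA, add_halves, mrpow_one hA]
  have hl : mrpow A (1 / 2) * mrpow A (-(1 / 2)) = 1 := by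
    rw [mrpow_mul_mrpow hA, add_neg_cancel, mrpow_zero hA]
  have hr : mrpow A (-(1 / 2)) * mrpow A (1 / 2) = 1 := by
    rw [mrpow_mul_mrpow hA, neg_add_cancel, mrpow_zero hA]
  have hP := isSelfAdjoint_mrpow A (1 / 2)
  have hQ := isSelfAdjoint_mrpow A (-(1 / 2))
  unfold natu
  set P := mrpow A (1 / 2)
  set Q := mrpow A (-(1 / 2))
  have hQAQ : Q * A * Q = 1 := by
    rw [← hhalf, ← mul_assoc, hr, one_mul, hl]
  set C := Q * B * Q with hCdef
  have hPCP : P * C * P = B := by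
    rw [hCdef, ← mul_assoc, ← mul_assoc, hl, one_mul, mul_assoc, hr, mul_one]
  have hC : IsSelfAdjoint C := by
    have hBs : IsSelfAdjoint B := hB.isHermitian
    simpa [hQ.star_eq] using hBs.conjugate Q
  have hCl : algebraMap ℝ _ h' ≤ C := by
    have := hQ.conjugate_le_conjugate (show h' • A ≤ B from hlow)
    rwa [mul_smul_comm, smul_mul_assoc, hQAQ, ← Algebra.algebraMap_eq_smul_one] at this
  have hCu : C ≤ algebraMap ℝ _ h := by
    have := hQ.conjugate_le_conjugate (show B ≤ h • A from hup)
    rwa [mul_smul_comm, smul_mul_assoc, hQAQ, ← Algebra.algebraMap_eq_smul_one] at this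
  have hsl := (algebraMap_le_iff_le_spectrum hC).1 hCl
  have hsu := (le_algebraMap_iff_spectrum_le hC).1 hCu
  have hmean : P * ((1 - p) • (1 : Matrix n n ℂ) + p • C) * P = (1 - p) • A + p • B := by
    rw [mul_add, add_mul, mul_smul_comm, mul_smul_comm, smul_mul_assoc, smul_mul_assoc, mul_one,
      hhalf, hPCP]
  constructor
  · have key := hP.conjugate_le_conjugate <|
      smul_mrpow_le hC (a := 1 - p) (b := p) (c := kantorovich h' ^ min p (1 - p)) (p := p)
      fun x hx => by
        have hxl := hsl x hx
        have hx0 : 0 < x := by linarith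
        refine le_trans ?_ (kantorovich_rpow_min_mul_rpow_le hx0 hp0 hp1)
        have := (kantorovich_pos (zero_lt_one.trans hh'1)).le
        gcongr
        exact kantorovich_le_kantorovich hh'1.le hxl
    rwa [hmean, mul_smul_comm, smul_mul_assoc] at key
  · have key := hP.conjugate_le_conjugate <|
      le_smul_mrpow hC (a := 1 - p) (b := p) (c := kantorovich h ^ max p (1 - p)) (p := p)
      fun x hx => by
        have hxl := hsl x hx
        have hx0 : 0 < x := by linarith
        refine (le_kantorovich_rpow_max_mul_rpow hx0).trans ?_
        have := (kantorovich_pos hx0).le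
        gcongr
        exact kantorovich_le_kantorovich (by linarith) (hsu x hx)
    rwa [hmean, mul_smul_comm, smul_mul_assoc] at key
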